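/- Let f : ℝ^p × ℝ^{n_x} × ℝ^{n_u} × ℝ^{n_y} → ℝ^{n_x} and h : ℝ^p × ℝ^{n_x} → ℝ^{n_y} satisfy the squared Lipschitz bounds ‖f(θ,x,u,w) − f(θ',x',u,w')‖² ≤ L_f²(‖θ−θ'‖² + ‖x−x'‖² + ‖w−w'‖²) and ‖h(θ,x) − h(θ',x')‖² ≤ L_h²(‖θ−θ'‖² + ‖x−x'‖²), and let ψ : ℝ^q × ℝ^D → ℝ^{n_x} satisfy ‖ψ(η,z) − ψ(η',z)‖² ≤ L_ψ²‖η−η'‖². Fix a data point z ∈ ℝ^D and sequences u_0, u_1, … in ℝ^{n_u} and y_0, y_1, … in ℝ^{n_y}. For parameters (θ,η), define the encoder-initialized innovation predictor by x̂_0(θ,η) = ψ(η, z), x̂_{k+1}(θ,η) = f(θ, x̂_k(θ,η), u_k, y_k − h(θ, x̂_k(θ,η))), and ŷ_k(θ,η) = h(θ, x̂_k(θ,η)). Then with L̃ = L_f·√(1+L_h²), for every k ≥ 0 and all parameters, ‖ŷ_k(θ,η) − ŷ_k(θ',η')‖² ≤ L_h²((1 + Σ_{j=1}^{k} L̃^{2j})‖θ−θ'‖²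 + L̃^{2k} L_ψ² ‖η−η'‖²). -/

import Mathlib

/-- Parameter sensitivity of the encoder-initialized innovation predictor (SUBNET):
with `L̃ = L_f √(1+L_h²)`, the k-step-ahead output prediction satisfies
`‖ŷ_k(θ,η) − ŷ_k(θ',η')‖² ≤ L_h²((1 + Σ_{j=1}^k L̃^{2j})‖θ−θ'‖² + L̃^{2k} L_ψ² ‖η−η'‖²)`. -/
theorem subnet_predictor_sensitivity
    {p q nx nu ny D : ℕ}
    (f : EuclideanSpace ℝ (Fin p) → EuclideanSpace ℝ (Fin nx) → EuclideanSpace ℝ (Fin nu) →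
      EuclideanSpace ℝ (Fin ny) → EuclideanSpace ℝ (Fin nx))
    (h : EuclideanSpace ℝ (Fin p) → EuclideanSpace ℝ (Fin nx) → EuclideanSpace ℝ (Fin ny))
    (ψ : EuclideanSpace ℝ (Fin q) → EuclideanSpace ℝ (Fin D) → EuclideanSpace ℝ (Fin nx))
    (Lf Lh Lψ : ℝ)
    (hf : ∀ θ θ' x x' u w w',
      ‖f θ x u w - f θ' x' u w'‖ ^ 2 ≤ Lf ^ 2 * (‖θ - θ'‖ ^ 2 + ‖x - x'‖ ^ 2 + ‖w - w'‖ ^ 2))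
    (hh : ∀ θ θ' x x',
      ‖h θ x - h θ' x'‖ ^ 2 ≤ Lh ^ 2 * (‖θ - θ'‖ ^ 2 + ‖x - x'‖ ^ 2))
    (hψ : ∀ η η' z, ‖ψ η z - ψ η' z‖ ^ 2 ≤ Lψ ^ 2 * ‖η - η'‖ ^ 2)
    (z : EuclideanSpace ℝ (Fin D))
    (u : ℕ → EuclideanSpace ℝ (Fin nu)) (y : ℕ → EuclideanSpace ℝ (Fin ny))
    (θ θ' : EuclideanSpace ℝ (Fin p)) (η η' : EuclideanSpace ℝ (Fin q))
    (xh xh' : ℕ → EuclideanSpace ℝ (Fin nx))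
    (hx0 : xh 0 = ψ η z) (hx0' : xh' 0 = ψ η' z)
    (hxs : ∀ k, xh (k + 1) = f θ (xh k) (u k) (y k - h θ (xh k)))
    (hxs' : ∀ k, xh' (k + 1) = f θ' (xh' k) (u k) (y k - h θ' (xh' k))) :
    ∀ k : ℕ,
      ‖h θ (xh k) - h θ' (xh' k)‖ ^ 2 ≤
        Lh ^ 2 * ((1 + ∑ j ∈ Finset.Icc 1 k, (Lf * Real.sqrt (1 + Lh ^ 2)) ^ (2 * j)) *
            ‖θ - θ'‖ ^ 2 +
          (Lf * Real.sqrt (1 + Lh ^ 2)) ^ (2 * k) * Lψ ^ 2 * ‖η - η'‖ ^ 2) := by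
  have hM : (Lf * Real.sqrt (1 + Lh ^ 2)) ^ 2 = Lf ^ 2 * (1 + Lh ^ 2) := by
    rw [mul_pow, Real.sq_sqrt (by positivity)]
  simp only [pow_mul, hM]
  set M := Lf ^ 2 * (1 + Lh ^ 2) with hMdef
  have hM0 : 0 ≤ M := by positivity
  have hS : ∀ k : ℕ, ∑ j ∈ Finset.Icc 1 (k + 1), M ^ j
      = M * (1 + ∑ j ∈ Finset.Icc 1 k, M ^ j) := by
    intro k
    induction k with
    | zero => simp
    | succ k ih =>
      have e : ∑ j ∈ Finset.Icc 1 (k + 1), M ^ j = ∑ j ∈ Finset.Icc 1 k, M ^ j + M ^ (k + 1) :=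
        Finset.sum_Icc_succ_top (by omega) _
      rw [Finset.sum_Icc_succ_top (by omega)]
      linear_combination ih - M * e
  have hX : ∀ k : ℕ, ‖xh k - xh' k‖ ^ 2 ≤
      (∑ j ∈ Finset.Icc 1 k, M ^ j) * ‖θ - θ'‖ ^ 2 + M ^ k * Lψ ^ 2 * ‖η - η'‖ ^ 2 := by
    intro k
    induction k with
    | zero => simpa [hx0, hx0'] using hψ η η' z
    | succ k ih =>
      have h1 := hf θ θ' (xh k) (xh' k) (u k) (y k - h θ (xh k)) (y k - h θ' (xh' k))
      rw [← hxs, ← hxs', sub_sub_sub_cancel_left, norm_sub_rev (h θ' _)] at h1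
      have h2 := mul_le_mul_of_nonneg_left (hh θ θ' (xh k) (xh' k)) (sq_nonneg Lf)
      have h3 := mul_le_mul_of_nonneg_left ih hM0
      have h4 : ‖xh (k + 1) - xh' (k + 1)‖ ^ 2 ≤ M * ‖θ - θ'‖ ^ 2 + M * ‖xh k - xh' k‖ ^ 2 := by
        rw [hMdef]
        linarith
      rw [hS, pow_succ M k]
      linarith
  intro k
  refine (hh θ θ' (xh k) (xh' k)).trans (mul_le_mul_of_nonneg_left ?_ (sq_nonneg Lh))
  linarith [hX k]
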